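/- The volume of the set of complex qubit channels 𝒬_ℂ, identified with a convex subset of ℝ¹² via the Choi parametrization with volume element 2⁷ dλ₁₂, equals 2π⁵/4725. -/

import Mathlib

open MeasureTheory Real
open scoped ComplexOrder

/-- The Choi matrix of a complex qubit channel with parameters
`(a, f, b, c, d, e, g) ∈ ℝ × ℝ × ℂ⁵` (a 12-real-dimensional parameter space). -/
noncomputable def choiC (v : ℝ × ℝ × ℂ × ℂ × ℂ × ℂ × ℂ) : Matrix (Fin 4) (Fin 4) ℂ :=
  let (a, f, b, c, d, e, g) := v
  !![(a : ℂ), b, c, d;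
     star b, 1 - a, e, -c;
     star c, star e, (f : ℂ), g;
     star d, -star c, star g, 1 - f]

/-!
Reordering the rows and columns of a Choi matrix as `0, 2, 1, 3` turns it into
`[[P, X], [Xᴴ, 1 - P]]` with `P`, `X` arbitrary `2 × 2` blocks, `P` Hermitian. For positive definite
diagonal blocks `A = Bᴴ B` and `D = Cᴴ C`, the `X` completing `[[A, X], [Xᴴ, D]]` to a positive
semidefinite matrix are the `Bᴴ Y C` with `Y` a contraction, so in the `2 × 2` case their volume is
`(det A)² (det D)²` times that of the unit ball of the operator norm. The latter is `π⁴ / 12`,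
computed by splitting off the rows of `Y` one at a time.

There remains the integral of `(det P)² (det (1 - P))²` over `0 ≤ P ≤ 1`. Since
`det (1 - P) = 1 - tr P + det P`, and `P ↦ 1 - P` reduces the integral to `tr P ≤ 1`, expanding the
second factor leaves a sum of Beta integrals.
-/

open scoped ENNReal Nat
open Matrix
open scoped Kronecker

/-- The truncated power `x ↦ x₊ᵏ`, with values in `ℝ≥0∞` so that it can be integrated without
integrability side conditions. The convention `0₊⁰ = 1` is immaterial almost everywhere. -/
noncomputable def truncPow (k : ℕ) (x : ℝ) : ℝ≥0∞ :=
  if 0 ≤ x then ENNReal.ofReal (x ^ k) else 0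

section TruncPow

variable {k : ℕ} {x : ℝ}

lemma truncPow_of_nonneg (hx : 0 ≤ x) : truncPow k x = ENNReal.ofReal (x ^ k) := if_pos hx

lemma truncPow_of_neg (hx : x < 0) : truncPow k x = 0 := if_neg hx.not_ge

@[fun_prop]
lemma measurable_truncPow (k : ℕ) : Measurable (truncPow k) :=
  Measurable.ite measurableSet_Ici (by fun_prop) measurable_const

lemma integral_pow_mul_sub_pow (i j : ℕ) {s : ℝ} (hs : 0 ≤ s) :
    ∫ t in (0 : ℝ)..s, t ^ i * (s - t) ^ j = i ! * j ! / (i + j + 1)! * s ^ (i + j + 1) := by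
  obtain rfl | hs := hs.eq_or_lt
  · simp
  have hbeta : Complex.betaIntegral (i + 1) (j + 1) = i ! * j ! / (i + j + 1)! := by
    rw [Complex.betaIntegral_eq_Gamma_mul_div _ _ (by norm_cast; simp) (by norm_cast; simp),
      Complex.Gamma_nat_eq_factorial, Complex.Gamma_nat_eq_factorial,
      ← Complex.Gamma_nat_eq_factorial (i + j + 1)]
    push_cast
    ring_nf
  have hscaled := Complex.betaIntegral_scaled (i + 1) (j + 1) hs
  rw [hbeta, show (i + 1 + (j + 1) - 1 : ℂ) = (i + j + 1 : ℕ) by push_cast; ring] at hscaled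
  simp only [add_sub_cancel_right, Complex.cpow_natCast] at hscaled
  apply Complex.ofReal_injective
  rw [← intervalIntegral.integral_ofReal]
  push_cast
  rw [hscaled, mul_comm]

lemma support_truncPow_mul_truncPow_sub_subset (i j : ℕ) (s : ℝ) :
    (Function.support fun t => truncPow i t * truncPow j (s - t)) ⊆ Set.Icc 0 s := fun _ ht =>
  ⟨not_lt.1 fun h => left_ne_zero_of_mul ht (truncPow_of_neg h),
    not_lt.1 fun h => right_ne_zero_of_mul ht (truncPow_of_neg (sub_neg.2 h))⟩

lemma lintegral_truncPow_mul_truncPow_sub (i j : ℕ) (s : ℝ) :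
    ∫⁻ t, truncPow i t * truncPow j (s - t) =
      ENNReal.ofReal (i ! * j ! / (i + j + 1)!) * truncPow (i + j + 1) s := by
  rw [← setLIntegral_eq_of_support_subset (support_truncPow_mul_truncPow_sub_subset i j s)]
  obtain hs | hs := lt_or_ge s 0
  · rw [Set.Icc_eq_empty hs.not_ge, Measure.restrict_empty, lintegral_zero_measure,
      truncPow_of_neg hs, mul_zero]
  have hcont : Continuous fun t : ℝ => t ^ i * (s - t) ^ j := by fun_prop
  have hnonneg : ∀ t ∈ Set.Icc 0 s, 0 ≤ t ^ i * (s - t) ^ j := fun t ht =>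
    mul_nonneg (pow_nonneg ht.1 i) (pow_nonneg (sub_nonneg.2 ht.2) j)
  calc ∫⁻ t in Set.Icc 0 s, truncPow i t * truncPow j (s - t)
    _ = ∫⁻ t in Set.Icc 0 s, ENNReal.ofReal (t ^ i * (s - t) ^ j) := by
      refine setLIntegral_congr_fun measurableSet_Icc fun t ht => ?_
      rw [truncPow_of_nonneg ht.1, truncPow_of_nonneg (sub_nonneg.2 ht.2),
        ENNReal.ofReal_mul (pow_nonneg ht.1 i)]
    _ = ENNReal.ofReal (∫ t in (0 : ℝ)..s, t ^ i * (s - t) ^ j) := by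
      rw [intervalIntegral.integral_of_le hs, ← integral_Icc_eq_integral_Ioc,
        ofReal_integral_eq_lintegral_ofReal (hcont.integrableOn_Icc)
          (ae_restrict_of_forall_mem measurableSet_Icc hnonneg)]
    _ = ENNReal.ofReal (i ! * j ! / (i + j + 1)!) * truncPow (i + j + 1) s := by
      rw [integral_pow_mul_sub_pow i j hs, truncPow_of_nonneg hs,
        ENNReal.ofReal_mul (by positivity)]

end TruncPow

lemma lintegral_comp_sq (g : ℝ → ℝ≥0∞) :
    ∫⁻ r in Set.Ioi 0, ENNReal.ofReal (2 * r) * g (r ^ 2) = ∫⁻ t in Set.Ioi 0, g t := by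
  have himage : (fun r : ℝ => r ^ 2) '' Set.Ioi 0 = Set.Ioi 0 := by
    ext t
    exact ⟨fun ⟨r, (hr : 0 < r), hrt⟩ => hrt ▸ (show 0 < r ^ 2 from pow_pos hr 2),
      fun ht => ⟨√t, Real.sqrt_pos.2 ht, Real.sq_sqrt (le_of_lt ht)⟩⟩
  have hinj : Set.InjOn (fun r : ℝ => r ^ 2) (Set.Ioi 0) := fun r hr s hs h =>
    (pow_left_inj₀ (le_of_lt hr) (le_of_lt hs) two_ne_zero).1 h
  have hchange := lintegral_image_eq_lintegral_abs_deriv_mul (f' := fun r => 2 * r)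
    measurableSet_Ioi (fun r _ => by simpa using (hasDerivAt_pow 2 r).hasDerivWithinAt) hinj g
  rw [himage] at hchange
  rw [hchange]
  exact setLIntegral_congr_fun measurableSet_Ioi fun r (hr : 0 < r) => by
    simp only [abs_of_pos (mul_pos two_pos hr)]

lemma lintegral_comp_norm_sq_complex {g : ℝ → ℝ≥0∞} (hg : Measurable g) :
    ∫⁻ z : ℂ, g (‖z‖ ^ 2) = ENNReal.ofReal π * ∫⁻ t in Set.Ioi 0, g t := by
  have hpolar : ∀ r : ℝ, ∫⁻ _ in Set.Ioo (-π) π, ENNReal.ofReal r * g (r ^ 2) =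
      ENNReal.ofReal π * (ENNReal.ofReal (2 * r) * g (r ^ 2)) := by
    intro r
    rw [lintegral_const, Measure.restrict_apply_univ, Real.volume_Ioo, sub_neg_eq_add,
      mul_right_comm, ← mul_assoc, ← ENNReal.ofReal_mul' (by positivity),
      ← ENNReal.ofReal_mul Real.pi_nonneg]
    ring_nf
  rw [← Complex.lintegral_comp_polarCoord_symm, polarCoord_target]
  simp only [Complex.norm_polarCoord_symm, sq_abs, smul_eq_mul]
  rw [Measure.volume_eq_prod, ← Measure.prod_restrict, lintegral_prod _ (by fun_prop)]
  simp only [hpolar]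
  rw [lintegral_const_mul _ (by fun_prop), lintegral_comp_sq]

lemma lintegral_truncPow_sub_norm_sq (k : ℕ) (s : ℝ) :
    ∫⁻ z : ℂ, truncPow k (s - ‖z‖ ^ 2) =
      ENNReal.ofReal (π / (k + 1)) * truncPow (k + 1) s := by
  have htail : ∫⁻ t in Set.Ioi 0, truncPow k (s - t) = ∫⁻ t, truncPow 0 t * truncPow k (s - t) := by
    rw [setLIntegral_congr Ioi_ae_eq_Ici, ← lintegral_indicator measurableSet_Ici]
    congr 1 with t
    obtain ht | ht := le_or_gt 0 t
    · simp [truncPow_of_nonneg ht, ht]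
    · simp [truncPow_of_neg ht, ht]
  rw [lintegral_comp_norm_sq_complex (g := fun t => truncPow k (s - t)) (by fun_prop), htail,
    lintegral_truncPow_mul_truncPow_sub, ← mul_assoc, ← ENNReal.ofReal_mul Real.pi_nonneg, zero_add]
  congr 2
  rw [Nat.factorial_succ]
  push_cast
  field_simp
  simp

section FinCons

variable {α : Type*} [MeasureSpace α] [SigmaFinite (volume : Measure α)] {n : ℕ}

lemma volume_preserving_fin_cons :
    MeasurePreserving fun p : α × (Fin n → α) => (Fin.cons p.1 p.2 : Fin (n + 1) → α) := by
  convert (volume_preserving_piFinSuccAbove (fun _ : Fin (n + 1) => α) 0).symm using 2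
  simp [MeasurableEquiv.piFinSuccAbove, Fin.insertNthEquiv, Fin.insertNth_zero']

lemma lintegral_fin_succ {g : (Fin (n + 1) → α) → ℝ≥0∞} (hg : Measurable g) :
    ∫⁻ u, g u = ∫⁻ z, ∫⁻ v : Fin n → α, g (Fin.cons z v) := by
  rw [← volume_preserving_fin_cons.lintegral_comp hg, Measure.volume_eq_prod,
    lintegral_prod]
  exact (hg.comp volume_preserving_fin_cons.measurable).aemeasurable

lemma volume_fin_succ {s : Set (Fin (n + 1) → α)} (hs : MeasurableSet s) :
    volume s = ∫⁻ z, volume {v : Fin n → α | (Fin.cons z v : Fin (n + 1) → α) ∈ s} := by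
  rw [← volume_preserving_fin_cons.measure_preimage hs.nullMeasurableSet, Measure.volume_eq_prod,
    Measure.prod_apply (volume_preserving_fin_cons.measurable hs)]
  rfl

end FinCons

lemma lintegral_truncPow_sub_sum_norm_sq (n k : ℕ) (s : ℝ) :
    ∫⁻ u : Fin n → ℂ, truncPow k (s - ∑ i, ‖u i‖ ^ 2) =
      ENNReal.ofReal (π ^ n * k ! / (k + n)!) * truncPow (k + n) s := by
  induction n generalizing s with
  | zero => simp [volume_pi, k.factorial_ne_zero]
  | succ n ih =>
    rw [lintegral_fin_succ (by fun_prop)]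
    simp only [Fin.sum_univ_succ, Fin.cons_zero, Fin.cons_succ, ← sub_sub, ih]
    rw [lintegral_const_mul _ (by fun_prop), lintegral_truncPow_sub_norm_sq, ← mul_assoc,
      ← ENNReal.ofReal_mul (by positivity), ← add_assoc k n 1, Nat.factorial_succ (k + n)]
    congr 2
    push_cast
    field_simp
    ring

section Completions

variable {m n : Type*}

/-- The matrices `X` for which the block matrix `[[A, X], [Xᴴ, D]]` is positive semidefinite, as a
subset of the measure space `m → n → ℂ`. For `A = 1` and `D = 1` these are the contractions. -/
def psdCompletions (A : Matrix m m ℂ) (D : Matrix n n ℂ) : Set (m → n → ℂ) :=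
  {X | (fromBlocks A (of X) (of X)ᴴ D).PosSemidef}

lemma isClosed_setOf_posSemidef {𝕜 ι : Type*} [RCLike 𝕜] [Finite ι] :
    IsClosed {M : Matrix ι ι 𝕜 | M.PosSemidef} := by
  cases nonempty_fintype ι
  simp only [posSemidef_iff_dotProduct_mulVec, Set.ofPred_and, Set.ofPred_forall]
  refine (isClosed_eq (by fun_prop) continuous_id).inter (isClosed_iInter fun x => ?_)
  exact isClosed_le continuous_const (by fun_prop)

lemma measurableSet_psdCompletions [Finite m] [Finite n] (A : Matrix m m ℂ) (D : Matrix n n ℂ) :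
    MeasurableSet (psdCompletions A D) := by
  have hcont : Continuous fun X : m → n → ℂ => fromBlocks A (of X) (of X)ᴴ D :=
    continuous_const.matrix_fromBlocks continuous_id continuous_id.matrix_conjTranspose
      continuous_const
  exact (isClosed_setOf_posSemidef.preimage hcont).measurableSet

lemma posSemidef_of_mem_psdCompletions {A : Matrix m m ℂ} {D : Matrix n n ℂ} {X : m → n → ℂ}
    (hX : X ∈ psdCompletions A D) : A.PosSemidef ∧ D.PosSemidef :=
  ⟨PosSemidef.submatrix hX Sum.inl, PosSemidef.submatrix hX Sum.inr⟩

lemma mem_psdCompletions_one_left_iff [Fintype m] [DecidableEq m] [Finite n] {D : Matrix n n ℂ}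
    {X : m → n → ℂ} : X ∈ psdCompletions 1 D ↔ (D - (of X)ᴴ * of X).PosSemidef := by
  cases nonempty_fintype n
  let := invertibleOne (α := Matrix m m ℂ)
  rw [psdCompletions, Set.mem_ofPred_eq, PosDef.one.fromBlocks₁₁, inv_one, Matrix.mul_one]

lemma cons_mem_psdCompletions_one_iff [Finite n] {k : ℕ} {D : Matrix n n ℂ} {u : n → ℂ}
    {X : Fin k → n → ℂ} :
    (Fin.cons u X : Fin (k + 1) → n → ℂ) ∈ psdCompletions 1 D ↔
      X ∈ psdCompletions 1 (D - vecMulVec (star u) u) := by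
  have hgram : (of (Fin.cons u X : Fin (k + 1) → n → ℂ))ᴴ * of (Fin.cons u X) =
      vecMulVec (star u) u + (of X)ᴴ * of X := by
    ext i j
    simp [Matrix.mul_apply, Fin.sum_univ_succ, vecMulVec_apply]
  rw [mem_psdCompletions_one_left_iff, mem_psdCompletions_one_left_iff, hgram, sub_sub]

lemma det_one_sub_vecMulVec_star [Fintype n] [DecidableEq n] (u : n → ℂ) :
    (1 - vecMulVec (star u) u).det = (1 - ∑ i, ‖u i‖ ^ 2 : ℝ) := by
  rw [vecMulVec_eq Unit, det_one_sub_mul_comm]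
  simp [det_unique, Matrix.mul_apply, Complex.mul_conj']

lemma psdCompletions_one_sub_vecMulVec_star_eq_empty [Fintype n] [DecidableEq n]
    {u : n → ℂ} (hu : 1 < ∑ i, ‖u i‖ ^ 2) (A : Matrix m m ℂ) :
    psdCompletions A (1 - vecMulVec (star u) u) = ∅ := by
  refine Set.eq_empty_of_forall_notMem fun X hX => hu.not_ge ?_
  have hdet := (posSemidef_of_mem_psdCompletions hX).2.det_nonneg
  rwa [det_one_sub_vecMulVec_star, Complex.zero_le_real, sub_nonneg] at hdet

lemma ae_sum_norm_sq_ne_one [Fintype n] : ∀ᵐ u : n → ℂ, ∑ i, ‖u i‖ ^ 2 ≠ 1 := by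
  let e := (PiLp.continuousLinearEquiv 2 ℝ fun _ : n => ℂ).symm
  have : (volume.map e).IsAddHaarMeasure := e.isAddHaarMeasure_map volume
  have hsphere := Measure.addHaar_sphere_of_ne_zero (volume.map e) 0 one_ne_zero
  rw [Measure.map_apply e.continuous.measurable Metric.isClosed_sphere.measurableSet] at hsphere
  filter_upwards [compl_mem_ae_iff.2 hsphere] with u hu hsum
  refine hu ?_
  rw [Set.mem_preimage, mem_sphere_zero_iff_norm, EuclideanSpace.norm_eq, Real.sqrt_eq_one]
  exact hsum

variable [Fintype m] [Fintype n] [DecidableEq m] [DecidableEq n]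

lemma volume_image_mul_mul (S : Matrix m m ℂ) (T : Matrix n n ℂ) (s : Set (m → n → ℂ)) :
    volume ((fun X => of.symm (S * of X * T)) '' s) =
      ENNReal.ofReal (Complex.normSq (S.det ^ Fintype.card n * T.det ^ Fintype.card m)) *
        volume s := by
  set L := (LinearEquiv.curry ℂ ℂ m n).conj (toLin' (S ⊗ₖ Tᵀ)) with hL
  have happly : ∀ X, of.symm (S * of X * T) = L.restrictScalars ℝ X := by
    intro X
    have hvec : Function.uncurry X = vec (of X)ᵀ := rfl
    simp only [hL, LinearMap.coe_restrictScalars, LinearEquiv.conj_apply_apply, toLin'_apply,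
      LinearEquiv.coe_curry, LinearEquiv.coe_curry_symm, hvec, kronecker_mulVec_vec]
    rw [← transpose_mul, ← transpose_mul, ← Matrix.mul_assoc]
    rfl
  have hdet : LinearMap.det L = S.det ^ Fintype.card n * T.det ^ Fintype.card m := by
    rw [hL, LinearEquiv.conj_apply, LinearMap.comp_assoc, LinearMap.det_conj, LinearMap.det_toLin',
      det_kronecker, det_transpose]
  have : (volume : Measure (m → n → ℂ)).IsAddHaarMeasure := Measure.pi.isAddHaarMeasure _
  simp_rw [happly]
  rw [Measure.addHaar_image_linearMap, LinearMap.det_restrictScalars, hdet,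
    Algebra.norm_complex_apply, abs_of_nonneg (Complex.normSq_nonneg _)]

lemma mul_mul_mem_psdCompletions_iff {B : Matrix m m ℂ} {C : Matrix n n ℂ} (hB : IsUnit B)
    (hC : IsUnit C) (X : m → n → ℂ) :
    of.symm (Bᴴ * of X * C) ∈ psdCompletions (Bᴴ * B) (Cᴴ * C) ↔ X ∈ psdCompletions 1 1 := by
  have hunit : IsUnit (fromBlocks B 0 0 C) := by
    rw [isUnit_iff_isUnit_det] at *
    simpa using hB.mul hC
  have := hunit.posSemidef_star_left_conjugate_iff (x := fromBlocks 1 (of X) (of X)ᴴ 1)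
  rw [psdCompletions, psdCompletions, Set.mem_ofPred_eq, Set.mem_ofPred_eq, ← this]
  simp [star_eq_conjTranspose, fromBlocks_conjTranspose, fromBlocks_multiply, Matrix.mul_assoc]

open MatrixOrder in
lemma exists_isUnit_eq_conjTranspose_mul_self {A : Matrix m m ℂ} (hA : A.PosDef) :
    ∃ B : Matrix m m ℂ, IsUnit B ∧ A = Bᴴ * B := by
  obtain ⟨B, rfl⟩ := CStarAlgebra.nonneg_iff_eq_star_mul_self.mp hA.posSemidef.nonneg
  exact ⟨B, isUnit_of_mul_isUnit_right hA.isUnit, rfl⟩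

lemma volume_psdCompletions {A : Matrix m m ℂ} {D : Matrix n n ℂ} (hA : A.PosDef)
    (hD : D.PosDef) :
    volume (psdCompletions A D) =
      ENNReal.ofReal (A.det.re ^ Fintype.card n * D.det.re ^ Fintype.card m) *
        volume (psdCompletions (1 : Matrix m m ℂ) (1 : Matrix n n ℂ)) := by
  obtain ⟨B, hB, rfl⟩ := exists_isUnit_eq_conjTranspose_mul_self hA
  obtain ⟨C, hC, rfl⟩ := exists_isUnit_eq_conjTranspose_mul_self hD
  have himage : (fun X : m → n → ℂ => of.symm (Bᴴ * of X * C)) '' psdCompletions 1 1 =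
      psdCompletions (Bᴴ * B) (Cᴴ * C) := by
    refine Set.Subset.antisymm (Set.image_subset_iff.2 fun X hX =>
      (mul_mul_mem_psdCompletions_iff hB hC X).2 hX) fun Y hY => ?_
    have hX : of.symm (Bᴴ * of (of.symm (Bᴴ⁻¹ * of Y * C⁻¹)) * C) = Y := by
      have hB' : IsUnit Bᴴ.det := by simpa using (isUnit_iff_isUnit_det B).1 hB
      simp [← Matrix.mul_assoc, mul_nonsing_inv _ hB',
        nonsing_inv_mul_cancel_right _ _ ((isUnit_iff_isUnit_det C).1 hC)]
    exact ⟨_, (mul_mul_mem_psdCompletions_iff hB hC _).1 (by rwa [hX]), hX⟩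
  have hre (z : ℂ) : (star z * z).re = Complex.normSq z := by
    rw [Complex.star_def, ← Complex.normSq_eq_conj_mul_self, Complex.ofReal_re]
  rw [← himage, volume_image_mul_mul, det_mul, det_mul, det_conjTranspose, det_conjTranspose, hre,
    hre, map_mul, map_pow, map_pow, Complex.star_def, Complex.normSq_conj]

lemma posSemidef_one_sub_conjTranspose_mul_self_iff {𝕜 : Type*} [RCLike 𝕜] {X : Matrix m n 𝕜} :
    (1 - Xᴴ * X).PosSemidef ↔ (1 - X * Xᴴ).PosSemidef := by
  let := invertibleOne (α := Matrix m m 𝕜)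
  let := invertibleOne (α := Matrix n n 𝕜)
  have hleft := (PosDef.one (n := m) (R := 𝕜)).fromBlocks₁₁ X 1
  have hright := PosDef.fromBlocks₂₂ (1 : Matrix m m 𝕜) X (PosDef.one (n := n))
  rw [inv_one, Matrix.mul_one] at hleft hright
  exact hleft.symm.trans hright

lemma posSemidef_one_sub_vecMulVec_star {u : n → ℂ} (hu : ∑ i, ‖u i‖ ^ 2 ≤ 1) :
    (1 - vecMulVec (star u) u).PosSemidef := by
  have hgram : 1 - replicateRow Unit u * (replicateRow Unit u)ᴴ =
      diagonal fun _ => ((1 - ∑ i, ‖u i‖ ^ 2 : ℝ) : ℂ) := by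
    ext
    simp [Matrix.mul_apply, Complex.mul_conj']
  rw [vecMulVec_eq Unit, ← conjTranspose_replicateRow,
    posSemidef_one_sub_conjTranspose_mul_self_iff, hgram]
  exact PosSemidef.diagonal fun _ => Complex.zero_le_real.2 (sub_nonneg.2 hu)

lemma posDef_one_sub_vecMulVec_star {u : n → ℂ} (hu : ∑ i, ‖u i‖ ^ 2 < 1) :
    (1 - vecMulVec (star u) u).PosDef := by
  rw [(posSemidef_one_sub_vecMulVec_star hu.le).posDef_iff_det_ne_zero, det_one_sub_vecMulVec_star,
    Complex.ofReal_ne_zero]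
  exact (sub_pos.2 hu).ne'

lemma ae_volume_psdCompletions_one_sub :
    ∀ᵐ u : n → ℂ, volume (psdCompletions (1 : Matrix m m ℂ) (1 - vecMulVec (star u) u)) =
      truncPow (Fintype.card m) (1 - ∑ i, ‖u i‖ ^ 2) *
        volume (psdCompletions (1 : Matrix m m ℂ) (1 : Matrix n n ℂ)) := by
  filter_upwards [ae_sum_norm_sq_ne_one] with u hu
  obtain hlt | hgt := hu.lt_or_gt
  · rw [volume_psdCompletions PosDef.one (posDef_one_sub_vecMulVec_star hlt),
      det_one_sub_vecMulVec_star, truncPow_of_nonneg (sub_nonneg.2 hlt.le), det_one,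
      Complex.ofReal_re, Complex.one_re, one_pow, one_mul]
  · rw [psdCompletions_one_sub_vecMulVec_star_eq_empty hgt, measure_empty,
      truncPow_of_neg (sub_neg.2 hgt), zero_mul]

end Completions

/- Splitting off the first row `u` leaves the completions for `D = 1 - uᴴ u`, whose determinant is
`1 - ‖u‖²`. -/
lemma volume_psdCompletions_succ (k n : ℕ) :
    volume (psdCompletions (1 : Matrix (Fin (k + 1)) (Fin (k + 1)) ℂ)
        (1 : Matrix (Fin n) (Fin n) ℂ)) =
      ENNReal.ofReal (π ^ n * k ! / (k + n)!) *
        volume (psdCompletions (1 : Matrix (Fin k) (Fin k) ℂ) (1 : Matrix (Fin n) (Fin n) ℂ)) := by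
  rw [volume_fin_succ (α := Fin n → ℂ) (measurableSet_psdCompletions 1 1)]
  simp only [cons_mem_psdCompletions_one_iff, Set.ofPred_mem_eq]
  rw [lintegral_congr_ae ae_volume_psdCompletions_one_sub, lintegral_mul_const _ (by fun_prop),
    Fintype.card_fin, lintegral_truncPow_sub_sum_norm_sq, truncPow_of_nonneg zero_le_one, one_pow,
    ENNReal.ofReal_one, mul_one]

lemma volume_psdCompletions_one (m n : ℕ) :
    volume (psdCompletions (1 : Matrix (Fin m) (Fin m) ℂ) (1 : Matrix (Fin n) (Fin n) ℂ)) =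
      ∏ k ∈ Finset.range m, ENNReal.ofReal (π ^ n * k ! / (k + n)!) := by
  induction m with
  | zero =>
    have huniv : psdCompletions (1 : Matrix (Fin 0) (Fin 0) ℂ) (1 : Matrix (Fin n) (Fin n) ℂ) =
        Set.univ :=
      Set.eq_univ_of_forall fun X =>
        mem_psdCompletions_one_left_iff.2 (by
          rw [show (of X)ᴴ * of X = 0 by ext; simp, sub_zero]
          exact PosSemidef.one)
    simp [huniv, volume_pi]
  | succ k ih => rw [volume_psdCompletions_succ, ih, Finset.prod_range_succ, mul_comm]

lemma posSemidef_fin_two_iff {𝕜 : Type*} [RCLike 𝕜] {M : Matrix (Fin 2) (Fin 2) 𝕜}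
    (hM : M.IsHermitian) : M.PosSemidef ↔ 0 ≤ M.trace ∧ 0 ≤ M.det := by
  refine ⟨fun h => ⟨h.trace_nonneg, h.det_nonneg⟩, fun ⟨htrace, hdet⟩ => ?_⟩
  rw [hM.trace_eq_sum_eigenvalues, Fin.sum_univ_two] at htrace
  rw [hM.det_eq_prod_eigenvalues, Fin.prod_univ_two] at hdet
  norm_cast at htrace hdet
  rw [hM.posSemidef_iff_eigenvalues_nonneg, Pi.le_def, Fin.forall_fin_two]
  obtain h | h := mul_nonneg_iff.1 hdet
  · exact h
  · exact ⟨show 0 ≤ _ by linarith, show 0 ≤ _ by linarith⟩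

section HermitianTwo

/-- The Hermitian matrix `[[a, c], [c̄, f]]`, in real coordinates. -/
def hermTwo (a f : ℝ) (c : ℂ) : Matrix (Fin 2) (Fin 2) ℂ := !![(a : ℂ), c; star c, (f : ℂ)]

variable (a f : ℝ) (c : ℂ)

lemma det_hermTwo : (hermTwo a f c).det = (a * f - ‖c‖ ^ 2 : ℝ) := by
  simp [hermTwo, det_fin_two_of, Complex.mul_conj']

lemma one_sub_hermTwo : 1 - hermTwo a f c = hermTwo (1 - a) (1 - f) (-c) := by
  ext i j
  fin_cases i <;> fin_cases j <;> simp [hermTwo]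

lemma posSemidef_hermTwo_iff : (hermTwo a f c).PosSemidef ↔ 0 ≤ a + f ∧ 0 ≤ a * f - ‖c‖ ^ 2 := by
  have hherm : (hermTwo a f c).IsHermitian := by
    ext i j
    fin_cases i <;> fin_cases j <;> simp [hermTwo]
  have htrace : (hermTwo a f c).trace = (a + f : ℝ) := by simp [hermTwo, trace_fin_two]
  rw [posSemidef_fin_two_iff hherm, det_hermTwo, htrace, Complex.zero_le_real,
    Complex.zero_le_real]

end HermitianTwo

lemma choiC_posSemidef_iff (a f : ℝ) (b c d e g : ℂ) :
    (choiC (a, f, b, c, d, e, g)).PosSemidef ↔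
      ![![b, d], ![star e, g]] ∈ psdCompletions (hermTwo a f c) (1 - hermTwo a f c) := by
  have hblocks : fromBlocks (hermTwo a f c) (of ![![b, d], ![star e, g]])
      (of ![![b, d], ![star e, g]])ᴴ (1 - hermTwo a f c) =
      (choiC (a, f, b, c, d, e, g)).submatrix (Sum.elim ![0, 2] ![1, 3])
        (Sum.elim ![0, 2] ![1, 3]) := by
    ext (i | i) (j | j) <;> fin_cases i <;> fin_cases j <;> simp [hermTwo, choiC]
  have hleft : Function.LeftInverse (Sum.elim ![0, 2] ![1, 3] : Fin 2 ⊕ Fin 2 → Fin 4)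
      ![Sum.inl 0, Sum.inr 0, Sum.inl 1, Sum.inr 1] := by decide
  rw [psdCompletions, Set.mem_ofPred_eq, hblocks]
  refine ⟨fun h => h.submatrix _, fun h => ?_⟩
  simpa [submatrix_submatrix, hleft.comp_eq_id] using
    h.submatrix ![Sum.inl 0, Sum.inr 0, Sum.inl 1, Sum.inr 1]

lemma volume_psdCompletions_one_fin_two :
    volume (psdCompletions (1 : Matrix (Fin 2) (Fin 2) ℂ) (1 : Matrix (Fin 2) (Fin 2) ℂ)) =
      ENNReal.ofReal (π ^ 4 / 12) := by
  rw [volume_psdCompletions_one, ← ENNReal.ofReal_prod_of_nonneg fun _ _ => by positivity]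
  congr 1
  simp only [Finset.prod_range_succ, Finset.prod_range_zero, Nat.factorial]
  push_cast
  ring

/-- The function `(det P)ⁿ (det (1 - P))ⁿ` of `P = hermTwo a f c`, extended by zero from
`{P | 0 ≤ P ≤ 1}` to all `P`. -/
noncomputable def detWeight (n : ℕ) (p : (ℝ × ℝ) × ℂ) : ℝ≥0∞ :=
  (Set.Icc 0 2).indicator (fun _ => truncPow n (p.1.1 * p.1.2 - ‖p.2‖ ^ 2) *
    truncPow n ((1 - p.1.1) * (1 - p.1.2) - ‖p.2‖ ^ 2)) (p.1.1 + p.1.2)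

lemma volume_psdCompletions_hermTwo_one_sub {a f : ℝ} {c : ℂ} (hdet : ‖c‖ ^ 2 ≠ a * f)
    (hdet' : ‖c‖ ^ 2 ≠ (1 - a) * (1 - f)) :
    volume (psdCompletions (hermTwo a f c) (1 - hermTwo a f c)) =
      detWeight 2 ((a, f), c) * ENNReal.ofReal (π ^ 4 / 12) := by
  by_cases hpsd : (hermTwo a f c).PosSemidef ∧ (1 - hermTwo a f c).PosSemidef
  · have hP := hpsd.1.posDef_iff_det_ne_zero.2 (by
      rw [det_hermTwo, Complex.ofReal_ne_zero]; exact sub_ne_zero.2 hdet.symm)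
    have hQ := hpsd.2.posDef_iff_det_ne_zero.2 (by
      rw [one_sub_hermTwo, det_hermTwo, Complex.ofReal_ne_zero, norm_neg]
      exact sub_ne_zero.2 hdet'.symm)
    rw [volume_psdCompletions hP hQ, volume_psdCompletions_one_fin_two]
    rw [one_sub_hermTwo, posSemidef_hermTwo_iff, posSemidef_hermTwo_iff, norm_neg] at hpsd
    obtain ⟨⟨htrace, hnonneg⟩, htrace', hnonneg'⟩ := hpsd
    rw [detWeight, Set.indicator_of_mem (Set.mem_Icc.2 ⟨htrace, by linarith⟩),
      truncPow_of_nonneg hnonneg, truncPow_of_nonneg hnonneg', one_sub_hermTwo, det_hermTwo,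
      det_hermTwo, norm_neg, Fintype.card_fin, Complex.ofReal_re, Complex.ofReal_re,
      ENNReal.ofReal_mul (sq_nonneg _)]
  · have hempty : psdCompletions (hermTwo a f c) (1 - hermTwo a f c) = ∅ :=
      Set.eq_empty_of_forall_notMem fun X hX => hpsd (posSemidef_of_mem_psdCompletions hX)
    rw [hempty, measure_empty, detWeight, Set.indicator_apply]
    split_ifs with htrace
    · rw [eq_comm, mul_eq_zero]
      refine Or.inl (by_contra fun hne => hpsd ?_)
      have hnonneg := not_lt.1 fun h => left_ne_zero_of_mul hne (truncPow_of_neg h)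
      have hnonneg' := not_lt.1 fun h => right_ne_zero_of_mul hne (truncPow_of_neg h)
      rw [one_sub_hermTwo, posSemidef_hermTwo_iff, posSemidef_hermTwo_iff, norm_neg]
      exact ⟨⟨htrace.1, hnonneg⟩, by linarith [htrace.2], hnonneg'⟩
    · rw [zero_mul]

lemma ae_norm_sq_ne {α : Type*} [MeasureSpace α] {h : α → ℝ} (hh : Measurable h) :
    ∀ᵐ p : α × ℂ, ‖p.2‖ ^ 2 ≠ h p.1 := by
  have hmeas : MeasurableSet {p : α × ℂ | ‖p.2‖ ^ 2 = h p.1} :=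
    measurableSet_eq_fun (by fun_prop) (by fun_prop)
  simp only [ae_iff, not_not]
  rw [Measure.volume_eq_prod, Measure.measure_prod_null hmeas]
  filter_upwards with x
  refine measure_mono_null (fun z hz => ?_) (Measure.addHaar_sphere volume (0 : ℂ) √(h x))
  rw [mem_sphere_zero_iff_norm, ← show ‖z‖ ^ 2 = h x from hz, Real.sqrt_sq (norm_nonneg z)]

/-- Rearranges the parameters of a Choi matrix into those of the blocks
`[[a, c], [c̄, f]]` and `[[b, d], [ē, g]]`. -/
def choiBlocks (v : ℝ × ℝ × ℂ × ℂ × ℂ × ℂ × ℂ) : ((ℝ × ℝ) × ℂ) × (Fin 2 → Fin 2 → ℂ) :=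
  let (a, f, b, c, d, e, g) := v
  (((a, f), c), ![![b, d], ![star e, g]])

lemma volume_preserving_vecCons_two {α : Type*} [MeasureSpace α]
    [SigmaFinite (volume : Measure α)] :
    MeasurePreserving fun p : α × α => (![p.1, p.2] : Fin 2 → α) :=
  (volume_preserving_finTwoArrow α).symm

lemma volume_preserving_matrix_two :
    MeasurePreserving fun q : ℂ × ℂ × ℂ × ℂ =>
      (![![q.1, q.2.1], ![star q.2.2.1, q.2.2.2]] : Fin 2 → Fin 2 → ℂ) := by
  have hstar : MeasurePreserving fun z : ℂ => star z := Complex.conjLIE.measurePreserving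
  have hrow := volume_preserving_vecCons_two (α := ℂ)
  exact volume_preserving_vecCons_two.comp
    ((hrow.prod (hrow.comp (hstar.prod (.id _)))).comp volume_preserving_prodAssoc.symm)

lemma volume_preserving_choiBlocks : MeasurePreserving choiBlocks := by
  have hswap : MeasurePreserving fun q : ℂ × ℂ × ℂ × ℂ × ℂ => (q.2.1, q.1, q.2.2) :=
    volume_preserving_prodAssoc.comp
      ((Measure.measurePreserving_swap.prod (.id _)).comp volume_preserving_prodAssoc.symm)
  have hmatrix := ((MeasurePreserving.id volume).prod volume_preserving_matrix_two).comp hswap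
  exact volume_preserving_prodAssoc.symm.comp
    (((MeasurePreserving.id volume).prod hmatrix).comp volume_preserving_prodAssoc.symm)

/-- The set of channels in the block coordinates of `choiBlocks`. -/
def blockChannels : Set (((ℝ × ℝ) × ℂ) × (Fin 2 → Fin 2 → ℂ)) :=
  {q | q.2 ∈ psdCompletions (hermTwo q.1.1.1 q.1.1.2 q.1.2) (1 - hermTwo q.1.1.1 q.1.1.2 q.1.2)}

lemma preimage_choiBlocks_blockChannels :
    choiBlocks ⁻¹' blockChannels = {v | (choiC v).PosSemidef} := by
  ext ⟨a, f, b, c, d, e, g⟩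
  exact (choiC_posSemidef_iff a f b c d e g).symm

lemma measurableSet_blockChannels : MeasurableSet blockChannels := by
  refine (isClosed_setOf_posSemidef.preimage ?_).measurableSet
  have hherm : Continuous fun q : ((ℝ × ℝ) × ℂ) × (Fin 2 → Fin 2 → ℂ) =>
      hermTwo q.1.1.1 q.1.1.2 q.1.2 := by
    unfold hermTwo
    fun_prop
  have hcorner : Continuous fun q : ((ℝ × ℝ) × ℂ) × (Fin 2 → Fin 2 → ℂ) => of q.2 :=
    continuous_snd
  exact hherm.matrix_fromBlocks hcorner hcorner.matrix_conjTranspose (continuous_const.sub hherm)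

lemma ae_volume_preimage_mk_blockChannels :
    ∀ᵐ p, volume (Prod.mk p ⁻¹' blockChannels) = detWeight 2 p * ENNReal.ofReal (π ^ 4 / 12) := by
  filter_upwards [ae_norm_sq_ne (h := fun x : ℝ × ℝ => x.1 * x.2) (by fun_prop),
    ae_norm_sq_ne (h := fun x : ℝ × ℝ => (1 - x.1) * (1 - x.2)) (by fun_prop)] with p hdet hdet'
  have hfiber : Prod.mk p ⁻¹' blockChannels =
      psdCompletions (hermTwo p.1.1 p.1.2 p.2) (1 - hermTwo p.1.1 p.1.2 p.2) := rfl
  rw [hfiber, volume_psdCompletions_hermTwo_one_sub (a := p.1.1) (f := p.1.2) hdet hdet']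

lemma volume_choiC_posSemidef :
    volume {v | (choiC v).PosSemidef} = (∫⁻ p, detWeight 2 p) * ENNReal.ofReal (π ^ 4 / 12) := by
  calc volume {v | (choiC v).PosSemidef}
    _ = volume blockChannels := by
      rw [← preimage_choiBlocks_blockChannels, volume_preserving_choiBlocks.measure_preimage
        measurableSet_blockChannels.nullMeasurableSet]
    _ = ∫⁻ p, volume (Prod.mk p ⁻¹' blockChannels) :=
      Measure.prod_apply measurableSet_blockChannels
    _ = (∫⁻ p, detWeight 2 p) * ENNReal.ofReal (π ^ 4 / 12) := by
      rw [lintegral_congr_ae ae_volume_preimage_mk_blockChannels,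
        lintegral_mul_const' _ _ ENNReal.ofReal_ne_top]

/-- For `0 ≤ τ ≤ 2`, the integral of `(det P)ⁿ (det (1 - P))ⁿ` over the `P ∈ [0, 1]` of trace `τ`.
For other `τ` only the sign of the two determinants is tested. -/
noncomputable def traceSlice (n : ℕ) (τ : ℝ) : ℝ≥0∞ :=
  ∫⁻ a, ∫⁻ c : ℂ, truncPow n (a * (τ - a) - ‖c‖ ^ 2) *
    truncPow n ((1 - a) * (1 - (τ - a)) - ‖c‖ ^ 2)

lemma measurable_detWeight (n : ℕ) : Measurable (detWeight n) := by
  have hdet : Measurable fun p : (ℝ × ℝ) × ℂ => truncPow n (p.1.1 * p.1.2 - ‖p.2‖ ^ 2) *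
      truncPow n ((1 - p.1.1) * (1 - p.1.2) - ‖p.2‖ ^ 2) := by fun_prop
  have htrace : Measurable fun p : (ℝ × ℝ) × ℂ => p.1.1 + p.1.2 := by fun_prop
  exact hdet.indicator (htrace measurableSet_Icc)

lemma lintegral_detWeight (n : ℕ) :
    ∫⁻ p, detWeight n p = ∫⁻ τ in Set.Icc 0 2, traceSlice n τ := by
  have hmeas := measurable_detWeight n
  calc ∫⁻ p, detWeight n p
    _ = ∫⁻ a, ∫⁻ f, ∫⁻ c, detWeight n ((a, f), c) := by
      rw [Measure.volume_eq_prod, lintegral_prod _ hmeas.aemeasurable, Measure.volume_eq_prod,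
        lintegral_prod _ hmeas.lintegral_prod_right'.aemeasurable]
    _ = ∫⁻ a, ∫⁻ τ, ∫⁻ c, detWeight n ((a, τ - a), c) := by
      congr! 2 with a
      exact (lintegral_sub_right_eq_self (fun f => ∫⁻ c, detWeight n ((a, f), c)) a).symm
    _ = ∫⁻ τ, ∫⁻ a, ∫⁻ c, detWeight n ((a, τ - a), c) := by
      have hshear : Measurable fun q : (ℝ × ℝ) × ℂ => ((q.1.1, q.1.2 - q.1.1), q.2) := by fun_prop
      exact lintegral_lintegral_swap (hmeas.comp hshear).lintegral_prod_right'.aemeasurable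
    _ = ∫⁻ τ in Set.Icc 0 2, traceSlice n τ := by
      rw [← lintegral_indicator measurableSet_Icc]
      congr! 2 with τ
      by_cases hτ : τ ∈ Set.Icc 0 2 <;> simp [detWeight, traceSlice, hτ]

lemma traceSlice_two_sub (n : ℕ) (τ : ℝ) : traceSlice n (2 - τ) = traceSlice n τ := by
  unfold traceSlice
  rw [← lintegral_sub_left_eq_self _ (1 : ℝ)]
  congr! 4
  rw [mul_comm]
  ring_nf

lemma setLIntegral_Icc_two_mul_of_symm {g : ℝ → ℝ≥0∞} {b : ℝ} (hb : 0 ≤ b)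
    (hg : ∀ t, g (2 * b - t) = g t) :
    ∫⁻ t in Set.Icc 0 (2 * b), g t = 2 * ∫⁻ t in Set.Icc 0 b, g t := by
  have hreflect : ∫⁻ t in Set.Icc b (2 * b), g t = ∫⁻ t in Set.Icc 0 b, g t := by
    rw [← (Measure.measurePreserving_sub_left volume (2 * b)).setLIntegral_comp_preimage_emb
      (MeasurableEquiv.subLeft (2 * b)).measurableEmbedding, Set.preimage_const_sub_Icc, sub_self]
    simp only [hg, show 2 * b - b = b by ring]
  have hdisj : Disjoint (Set.Icc 0 b) (Set.Ioc b (2 * b)) :=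
    Set.disjoint_left.2 fun t ht ht' => ht'.1.not_ge ht.2
  rw [← Set.Icc_union_Ioc_eq_Icc hb (by linarith : b ≤ 2 * b),
    lintegral_union measurableSet_Ioc hdisj, setLIntegral_congr Ioc_ae_eq_Icc, hreflect, two_mul]

lemma truncPow_mul_truncPow_add (n : ℕ) {s : ℝ} (hs : 0 ≤ s) (x : ℝ) :
    truncPow n x * truncPow n (x + s) =
      ∑ j ∈ Finset.range (n + 1), n.choose j * truncPow (n - j) s * truncPow (n + j) x := by
  obtain hx | hx := lt_or_ge x 0
  · simp [truncPow_of_neg hx]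
  simp only [truncPow_of_nonneg hx, truncPow_of_nonneg hs, truncPow_of_nonneg (add_nonneg hx hs)]
  rw [← ENNReal.ofReal_mul (by positivity), add_pow, Finset.mul_sum,
    ENNReal.ofReal_sum_of_nonneg fun _ _ => by positivity]
  refine Finset.sum_congr rfl fun j _ => ?_
  rw [← ENNReal.ofReal_natCast, ← ENNReal.ofReal_mul (by positivity),
    ← ENNReal.ofReal_mul (by positivity)]
  congr 1
  ring

lemma truncPow_mul_sub (k : ℕ) {τ : ℝ} (hτ : 0 ≤ τ) (a : ℝ) :
    truncPow k (a * (τ - a)) = truncPow k a * truncPow k (τ - a) := by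
  obtain ha | ha := lt_or_ge a 0
  · rw [truncPow_of_neg ha, zero_mul, truncPow_of_neg (mul_neg_of_neg_of_pos ha (by linarith))]
  obtain ha' | ha' := lt_or_ge (τ - a) 0
  · rw [truncPow_of_neg ha', mul_zero, truncPow_of_neg (mul_neg_of_pos_of_neg (by linarith) ha')]
  · rw [truncPow_of_nonneg ha, truncPow_of_nonneg ha', truncPow_of_nonneg (mul_nonneg ha ha'),
      mul_pow, ENNReal.ofReal_mul (pow_nonneg ha k)]

lemma lintegral_truncPow_mul_sub_sub_norm_sq (k : ℕ) {τ : ℝ} (hτ : 0 ≤ τ) :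
    ∫⁻ a, ∫⁻ c : ℂ, truncPow k (a * (τ - a) - ‖c‖ ^ 2) =
      ENNReal.ofReal (π / (k + 1) * ((k + 1)! ^ 2 / (2 * k + 3)!)) * truncPow (2 * k + 3) τ := by
  simp only [lintegral_truncPow_sub_norm_sq, truncPow_mul_sub _ hτ]
  rw [lintegral_const_mul' _ _ ENNReal.ofReal_ne_top, lintegral_truncPow_mul_truncPow_sub,
    ← mul_assoc, ← ENNReal.ofReal_mul (by positivity), ← sq,
    show k + 1 + (k + 1) + 1 = 2 * k + 3 by ring]

lemma traceSlice_of_mem_Icc (n : ℕ) {τ : ℝ} (hτ : τ ∈ Set.Icc 0 1) :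
    traceSlice n τ = ∑ j ∈ Finset.range (n + 1), n.choose j * truncPow (n - j) (1 - τ) *
      (ENNReal.ofReal (π / ((n + j : ℕ) + 1) * ((n + j + 1)! ^ 2 / (2 * (n + j) + 3)!)) *
        truncPow (2 * (n + j) + 3) τ) := by
  have hdet (a : ℝ) (c : ℂ) : (1 - a) * (1 - (τ - a)) - ‖c‖ ^ 2 =
      a * (τ - a) - ‖c‖ ^ 2 + (1 - τ) := by ring
  have hfinite (j : ℕ) : n.choose j * truncPow (n - j) (1 - τ) ≠ ∞ := by
    rw [truncPow_of_nonneg (sub_nonneg.2 hτ.2)]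
    exact ENNReal.mul_ne_top (ENNReal.natCast_ne_top _) ENNReal.ofReal_ne_top
  simp only [traceSlice, hdet, truncPow_mul_truncPow_add n (sub_nonneg.2 hτ.2)]
  calc ∫⁻ a, ∫⁻ c : ℂ, ∑ j ∈ Finset.range (n + 1), n.choose j * truncPow (n - j) (1 - τ) *
        truncPow (n + j) (a * (τ - a) - ‖c‖ ^ 2)
    _ = ∫⁻ a, ∑ j ∈ Finset.range (n + 1), n.choose j * truncPow (n - j) (1 - τ) *
        ∫⁻ c : ℂ, truncPow (n + j) (a * (τ - a) - ‖c‖ ^ 2) := by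
      congr! 2 with a
      rw [lintegral_finsetSum _ fun j _ => by fun_prop]
      simp only [lintegral_const_mul' _ _ (hfinite _)]
    _ = ∑ j ∈ Finset.range (n + 1), n.choose j * truncPow (n - j) (1 - τ) *
        ∫⁻ a, ∫⁻ c : ℂ, truncPow (n + j) (a * (τ - a) - ‖c‖ ^ 2) := by
      rw [lintegral_finsetSum _ fun j _ => ?_]
      · simp only [lintegral_const_mul' _ _ (hfinite _)]
      · simp only [lintegral_truncPow_sub_norm_sq]
        fun_prop
    _ = _ := by simp only [lintegral_truncPow_mul_sub_sub_norm_sq _ hτ.1]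

lemma setLIntegral_Icc_zero_one_truncPow_mul_truncPow (i j : ℕ) :
    ∫⁻ τ in Set.Icc 0 1, truncPow i τ * truncPow j (1 - τ) =
      ENNReal.ofReal (i ! * j ! / (i + j + 1)!) := by
  rw [setLIntegral_eq_of_support_subset (support_truncPow_mul_truncPow_sub_subset i j 1),
    lintegral_truncPow_mul_truncPow_sub, truncPow_of_nonneg zero_le_one, one_pow,
    ENNReal.ofReal_one, mul_one]

lemma setLIntegral_Icc_zero_one_traceSlice (n : ℕ) :
    ∫⁻ τ in Set.Icc 0 1, traceSlice n τ = ∑ j ∈ Finset.range (n + 1), n.choose j *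
      ENNReal.ofReal
        (π / ((n + j : ℕ) + 1) * ((n + j + 1)! ^ 2 * (n - j)! / (3 * n + j + 4)!)) := by
  rw [setLIntegral_congr_fun measurableSet_Icc fun τ hτ => traceSlice_of_mem_Icc n hτ,
    lintegral_finsetSum _ fun j _ => by fun_prop]
  refine Finset.sum_congr rfl fun j hj => ?_
  have hj : j ≤ n := Finset.mem_range_succ_iff.1 hj
  have hfactor (τ : ℝ) : n.choose j * truncPow (n - j) (1 - τ) *
      (ENNReal.ofReal (π / ((n + j : ℕ) + 1) * ((n + j + 1)! ^ 2 / (2 * (n + j) + 3)!)) *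
        truncPow (2 * (n + j) + 3) τ) = n.choose j *
      (ENNReal.ofReal (π / ((n + j : ℕ) + 1) * ((n + j + 1)! ^ 2 / (2 * (n + j) + 3)!)) *
        (truncPow (2 * (n + j) + 3) τ * truncPow (n - j) (1 - τ))) := by ring
  simp only [hfactor]
  rw [lintegral_const_mul' _ _ (ENNReal.natCast_ne_top _),
    lintegral_const_mul' _ _ ENNReal.ofReal_ne_top,
    setLIntegral_Icc_zero_one_truncPow_mul_truncPow, ← ENNReal.ofReal_mul (by positivity),
    show 2 * (n + j) + 3 + (n - j) + 1 = 3 * n + j + 4 by omega]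
  congr 2
  field_simp

lemma lintegral_detWeight_eq_sum (n : ℕ) :
    ∫⁻ p, detWeight n p = ENNReal.ofReal (2 * ∑ j ∈ Finset.range (n + 1), n.choose j *
      (π / ((n + j : ℕ) + 1) * ((n + j + 1)! ^ 2 * (n - j)! / (3 * n + j + 4)!))) := by
  have hsymm := setLIntegral_Icc_two_mul_of_symm zero_le_one (g := traceSlice n)
    (by simpa only [mul_one] using traceSlice_two_sub n)
  rw [mul_one] at hsymm
  rw [lintegral_detWeight, hsymm, setLIntegral_Icc_zero_one_traceSlice,
    ENNReal.ofReal_mul zero_le_two, ENNReal.ofReal_sum_of_nonneg fun _ _ => by positivity,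
    ENNReal.ofReal_ofNat]
  simp only [ENNReal.ofReal_mul (Nat.cast_nonneg _), ENNReal.ofReal_natCast]

lemma lintegral_detWeight_two : ∫⁻ p, detWeight 2 p = ENNReal.ofReal (π / 25200) := by
  rw [lintegral_detWeight_eq_sum]
  congr 1
  simp only [Finset.sum_range_succ, Finset.sum_range_zero, Nat.factorial, Nat.choose]
  push_cast
  ring

/-- The volume of the space of complex qubit channels `𝒬_ℂ ⊆ ℝ¹²` (with volume element
`2⁷ dλ₁₂`) equals `2π⁵/4725`. -/
theorem stmt_15 :
    2 ^ 7 * volume {v : ℝ × ℝ × ℂ × ℂ × ℂ × ℂ × ℂ | (choiC v).PosSemidef} =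
      ENNReal.ofReal (2 * π ^ 5 / 4725) := by
  have hpow : (2 ^ 7 : ℝ≥0∞) = ENNReal.ofReal (2 ^ 7) := by
    rw [ENNReal.ofReal_pow zero_le_two, ENNReal.ofReal_ofNat]
  rw [volume_choiC_posSemidef, lintegral_detWeight_two, hpow, ← ENNReal.ofReal_mul (by positivity),
    ← ENNReal.ofReal_mul (by positivity)]
  congr 1
  ring
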